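/- If T is an unbounded self-adjoint operator on a Hilbert space H which is G-invariant with respect to a unitary representation V : G → U(H), then V cannot be expressed as a direct sum of finitely many irreducible representations. -/

import Mathlib

open scoped InnerProductSpace
open LinearPMap

/-- `G`-invariance of a (possibly unbounded) operator `T` with respect to a unitary
representation `V`. -/
def GInvariant {H : Type*} [NormedAddCommGroup H] [InnerProductSpace ℂ H]
    {G : Type*} [Group G] (V : G →* (H ≃ₗᵢ[ℂ] H)) (T : H →ₗ.[ℂ] H) : Prop :=
  ∀ g : G, ∀ x : T.domain, ∃ hx : V g (x : H) ∈ T.domain,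
    T ⟨V g (x : H), hx⟩ = V g (T x)

/-!
By Schur's lemma, a finite sum of irreducible unitary representations `V` has a finite-dimensional
commutant. An intertwiner `S` into such a `V` has closed range: after replacing the target by the
closure of the range, `S S†` is an injective element of a finite-dimensional commutant, so left
multiplication by it is onto and `S S†` is right invertible. The graph of a closed `G`-invariant
operator `T` carries a unitary representation, and projecting it to the first coordinate is an
intertwiner into `V` with range `D(T)`. So `D(T)` is closed, and `T` is bounded by the closed graph
theorem.
-/

section UnitaryRepresentation

variable {𝕜 G E F E' F' : Type*} [RCLike 𝕜] [Group G]
  [NormedAddCommGroup E] [InnerProductSpace 𝕜 E] [NormedAddCommGroup F] [InnerProductSpace 𝕜 F]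
  [NormedAddCommGroup E'] [InnerProductSpace 𝕜 E'] [NormedAddCommGroup F'] [InnerProductSpace 𝕜 F']
  {V : G →* (E ≃ₗᵢ[𝕜] E)} {W : G →* (F ≃ₗᵢ[𝕜] F)}
  {V' : G →* (E' ≃ₗᵢ[𝕜] E')} {W' : G →* (F' ≃ₗᵢ[𝕜] F')}

/-- The continuous representation underlying a unitary representation, which gives access to
the Mathlib theory of continuous intertwining maps. -/
def unitaryContRep (V : G →* (E ≃ₗᵢ[𝕜] E)) : ContRepresentation 𝕜 G E :=
  .ofMonoidHom
    { toFun := fun g => (V g : E →L[𝕜] E)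
      map_one' := by rw [map_one]; rfl
      map_mul' := fun g h => by rw [map_mul]; rfl }

theorem adjoint_unitaryContRep [CompleteSpace E] (V : G →* (E ≃ₗᵢ[𝕜] E)) (g : G) :
    ContinuousLinearMap.adjoint (unitaryContRep V g) = unitaryContRep V g⁻¹ := by
  change ContinuousLinearMap.adjoint (V g : E →L[𝕜] E) = (V g⁻¹ : E →L[𝕜] E)
  rw [LinearIsometryEquiv.adjoint_eq_symm, map_inv]
  rfl

/-- Bounded intertwining operators between two unitary representations. -/
abbrev Intertwiner (V : G →* (E ≃ₗᵢ[𝕜] E)) (W : G →* (F ≃ₗᵢ[𝕜] F)) : Type _ :=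
  ContIntertwiningMap (unitaryContRep V) (unitaryContRep W)

namespace Intertwiner

theorem apply_rep (S : Intertwiner V W) (g : G) (x : E) : S (V g x) = W g (S x) :=
  S.isIntertwining g x

/-- The adjoint of an intertwiner, which intertwines in the opposite direction because both
representations are unitary. -/
noncomputable def adjoint [CompleteSpace E] [CompleteSpace F] (S : Intertwiner V W) :
    Intertwiner W V where
  toContinuousLinearMap := ContinuousLinearMap.adjoint S.toContinuousLinearMap
  isIntertwining' g := by
    have h := congrArg ContinuousLinearMap.adjoint (S.isIntertwining' g⁻¹)
    rw [ContinuousLinearMap.adjoint_comp, ContinuousLinearMap.adjoint_comp,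
      adjoint_unitaryContRep, adjoint_unitaryContRep, inv_inv] at h
    exact h.symm

/-- The linear map `A ↦ R ∘ A ∘ S` between spaces of intertwiners. -/
def sandwich (R : Intertwiner W W') (S : Intertwiner V' V) :
    Intertwiner V W →ₗ[𝕜] Intertwiner V' W' where
  toFun A := R.comp (A.comp S)
  map_add' A B := by rw [ContIntertwiningMap.add_comp, ContIntertwiningMap.comp_add]
  map_smul' c A := by
    rw [ContIntertwiningMap.smul_comp, ContIntertwiningMap.comp_smul, RingHom.id_apply]

@[simp]
theorem sandwich_apply (R : Intertwiner W W') (S : Intertwiner V' V) (A : Intertwiner V W)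
    (x : E') : sandwich R S A x = R (A (S x)) :=
  rfl

end Intertwiner

/-- A subspace mapped into itself by every operator of a unitary representation. -/
def IsInvariantSubspace (V : G →* (E ≃ₗᵢ[𝕜] E)) (K : Submodule 𝕜 E) : Prop :=
  ∀ g, K.map (V g).toLinearEquiv.toLinearMap ≤ K

namespace IsInvariantSubspace

variable {K : Submodule 𝕜 E}

theorem apply_mem (hK : IsInvariantSubspace V K) (g : G) {x : E} (hx : x ∈ K) : V g x ∈ K :=
  hK g (Submodule.mem_map_of_mem hx)

theorem topologicalClosure (hK : IsInvariantSubspace V K) :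
    IsInvariantSubspace V K.topologicalClosure := by
  rintro g _ ⟨x, hx, rfl⟩
  exact map_mem_closure (V g).continuous hx fun y hy => hK.apply_mem g hy

theorem ker (S : Intertwiner V W) : IsInvariantSubspace V S.toContinuousLinearMap.ker := by
  rintro g _ ⟨x, hx, rfl⟩
  have hSx : S x = 0 := hx
  exact (S.apply_rep g x).trans (by rw [hSx, _root_.map_zero])

theorem range (S : Intertwiner V W) : IsInvariantSubspace W S.toContinuousLinearMap.range := by
  rintro g _ ⟨_, ⟨x, rfl⟩, rfl⟩
  exact ⟨V g x, S.apply_rep g x⟩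

/-- The unitary representation on an invariant subspace. -/
def subrep (hK : IsInvariantSubspace V K) : G →* (K ≃ₗᵢ[𝕜] K) where
  toFun g :=
    { toLinearMap := (V g).toLinearEquiv.toLinearMap.restrict fun _ => hK.apply_mem g
      invFun := fun x => ⟨V g⁻¹ x, hK.apply_mem g⁻¹ x.2⟩
      left_inv := fun x => Subtype.ext <| by
        change V g⁻¹ (V g x) = x
        rw [map_inv]
        exact (V g).symm_apply_apply x
      right_inv := fun x => Subtype.ext <| by
        change V g (V g⁻¹ x) = x
        rw [map_inv]
        exact (V g).apply_symm_apply x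
      norm_map' := fun x => (V g).norm_map x }
  map_one' := by
    ext x
    exact congrArg (fun U : E ≃ₗᵢ[𝕜] E => U x) (map_one V)
  map_mul' g h := by
    ext x
    exact congrArg (fun U : E ≃ₗᵢ[𝕜] E => U x) (map_mul V g h)

/-- The inclusion of an invariant subspace, as an intertwiner. -/
def inclusion (hK : IsInvariantSubspace V K) : Intertwiner hK.subrep V where
  toContinuousLinearMap := K.subtypeL
  isIntertwining' _ := rfl

@[simp]
theorem inclusion_apply (hK : IsInvariantSubspace V K) (x : K) : hK.inclusion x = x :=
  rfl

/-- The orthogonal projection onto an invariant subspace, as an intertwiner. -/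
noncomputable def projection [CompleteSpace E] [CompleteSpace K] (hK : IsInvariantSubspace V K) :
    Intertwiner V hK.subrep :=
  hK.inclusion.adjoint

theorem projection_apply [CompleteSpace E] [CompleteSpace K] (hK : IsInvariantSubspace V K)
    (x : E) : hK.projection x = K.orthogonalProjectionOnto x :=
  congrArg (fun P : E →L[𝕜] K => P x) K.adjoint_subtypeL

end IsInvariantSubspace

theorem finiteDimensional_intertwiner_subrep [CompleteSpace E] {K : Submodule 𝕜 E}
    [CompleteSpace K] (hK : IsInvariantSubspace V K) [FiniteDimensional 𝕜 (Intertwiner V V)] :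
    FiniteDimensional 𝕜 (Intertwiner hK.subrep hK.subrep) := by
  refine Module.Finite.of_injective (Intertwiner.sandwich hK.inclusion hK.projection)
    fun A B hAB => DFunLike.ext _ _ fun x => Subtype.ext ?_
  have h := DFunLike.congr_fun hAB (x : E)
  simpa [IsInvariantSubspace.projection_apply] using h

theorem finiteDimensional_intertwiner_of_iSup [CompleteSpace F] {ι κ : Type*}
    [Finite ι] [Finite κ] {L : ι → Submodule 𝕜 E} {M : κ → Submodule 𝕜 F}
    (hL : ∀ i, IsInvariantSubspace V (L i)) (hM : ∀ j, IsInvariantSubspace W (M j))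
    (hLtop : (⨆ i, L i).topologicalClosure = ⊤) (hMtop : (⨆ j, M j).topologicalClosure = ⊤)
    [∀ j, CompleteSpace (M j)]
    [∀ i j, FiniteDimensional 𝕜 (Intertwiner (hL i).subrep (hM j).subrep)] :
    FiniteDimensional 𝕜 (Intertwiner V W) := by
  let blocks : Intertwiner V W →ₗ[𝕜]
      ∀ p : ι × κ, Intertwiner (hL p.1).subrep (hM p.2).subrep :=
    LinearMap.pi fun p => Intertwiner.sandwich (hM p.2).projection (hL p.1).inclusion
  refine Module.Finite.of_injective blocks ((injective_iff_map_eq_zero blocks).2 fun A hA => ?_)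
  have hLker : ∀ i, L i ≤ A.toContinuousLinearMap.ker := fun i x hx => by
    have hAx : A x ∈ (⨆ j, M j)ᗮ := by
      rw [← Submodule.iInf_orthogonal, Submodule.mem_iInf]
      intro j
      rw [← Submodule.orthogonalProjectionOnto_eq_zero_iff, ← (hM j).projection_apply]
      have hblock := DFunLike.congr_fun (congrFun hA (i, j)) ⟨x, hx⟩
      rwa [Pi.zero_apply, ContIntertwiningMap.zero_apply] at hblock
    rwa [← Submodule.orthogonal_closure, hMtop, Submodule.top_orthogonal_eq_bot,
      Submodule.mem_bot] at hAx
  have hker : ⊤ ≤ A.toContinuousLinearMap.ker := hLtop ▸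
    Submodule.topologicalClosure_minimal _ (iSup_le hLker) A.toContinuousLinearMap.isClosed_ker
  exact DFunLike.ext _ _ fun x => hker Submodule.mem_top

theorem Intertwiner.surjective_of_denseRange [CompleteSpace E] [CompleteSpace F]
    [FiniteDimensional 𝕜 (Intertwiner W W)] (S : Intertwiner V W) (hS : DenseRange S) :
    Function.Surjective S := by
  let B : Intertwiner W W := S.comp S.adjoint
  have hB : Function.Injective B := by
    have hadj : Function.Injective (ContinuousLinearMap.adjoint S.toContinuousLinearMap) := by
      have hrange : S.toContinuousLinearMap.range.topologicalClosure = ⊤ :=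
        Submodule.dense_iff_topologicalClosure_eq_top.1 hS
      refine LinearMap.ker_eq_bot.1 ?_
      rw [← ContinuousLinearMap.orthogonal_range, ← Submodule.topologicalClosure_eq_top_iff, hrange]
    exact (ContinuousLinearMap.self_comp_adjoint_injective_iff _).2 hadj
  have hleft : Function.Injective (Intertwiner.sandwich B (1 : Intertwiner W W)) :=
    fun A A' h => DFunLike.ext _ _ fun x => hB (DFunLike.congr_fun h x)
  obtain ⟨X, hX⟩ := LinearMap.injective_iff_surjective.1 hleft 1
  exact fun y => ⟨S.adjoint (X y), DFunLike.congr_fun hX y⟩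

theorem Intertwiner.isClosed_range [CompleteSpace E] [CompleteSpace F]
    [FiniteDimensional 𝕜 (Intertwiner W W)] (S : Intertwiner V W) :
    IsClosed (Set.range S) := by
  let K := S.toContinuousLinearMap.range.topologicalClosure
  have hK : IsInvariantSubspace W K := (IsInvariantSubspace.range S).topologicalClosure
  have := finiteDimensional_intertwiner_subrep hK
  have hmem : ∀ x, S x ∈ K := fun x => subset_closure ⟨x, rfl⟩
  let S' : Intertwiner V hK.subrep :=
    { toContinuousLinearMap := S.toContinuousLinearMap.codRestrict K hmem
      isIntertwining' := fun g => by
        ext x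
        exact S.apply_rep g x }
  have hdense : DenseRange S' := Subtype.dense_iff.2 fun y hy => by
    rwa [← Set.range_comp]
  have hrange : Set.range S = K := Set.Subset.antisymm (Set.range_subset_iff.2 hmem) fun y hy => by
    obtain ⟨x, hx⟩ := S'.surjective_of_denseRange hdense ⟨y, hy⟩
    exact ⟨x, congrArg Subtype.val hx⟩
  exact hrange ▸ S.toContinuousLinearMap.range.isClosed_topologicalClosure

/-- Topological irreducibility: only closed invariant subspaces are considered, and the zero
representation is allowed. -/
def IsTopIrreducible (V : G →* (E ≃ₗᵢ[𝕜] E)) : Prop :=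
  ∀ K : Submodule 𝕜 E, IsClosed (K : Set E) → IsInvariantSubspace V K → K = ⊥ ∨ K = ⊤

theorem isTopIrreducible_subrep {L : Submodule 𝕜 E} (hclosed : IsClosed (L : Set E))
    (hL : IsInvariantSubspace V L)
    (hirr : ∀ K : Submodule 𝕜 E, K ≤ L → IsClosed (K : Set E) → IsInvariantSubspace V K →
      K = ⊥ ∨ K = L) :
    IsTopIrreducible hL.subrep := by
  intro K hKclosed hK
  have hinj : Function.Injective (Submodule.map L.subtype) :=
    Submodule.map_injective_of_injective L.injective_subtype
  have hKV : IsInvariantSubspace V (K.map L.subtype) := by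
    rintro g _ ⟨_, ⟨x, hx, rfl⟩, rfl⟩
    exact ⟨_, hK.apply_mem g hx, rfl⟩
  refine (hirr (K.map L.subtype) (Submodule.map_subtype_le L K)
    (hclosed.isClosedEmbedding_subtypeVal.isClosedMap _ hKclosed) hKV).imp (fun h => ?_) fun h => ?_
  · exact hinj (by rw [h, Submodule.map_bot])
  · exact hinj (by rw [h, Submodule.map_subtype_top])

theorem IsTopIrreducible.eq_zero_or_injective (hV : IsTopIrreducible V) (S : Intertwiner V W) :
    S = 0 ∨ Function.Injective S := by
  rcases hV _ S.toContinuousLinearMap.isClosed_ker (IsInvariantSubspace.ker S) with h | h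
  · exact Or.inr (LinearMap.ker_eq_bot.1 h)
  · exact Or.inl (DFunLike.ext _ _ fun _ => LinearMap.mem_ker.1 (h.ge Submodule.mem_top))

/-- The direct sum of two unitary representations, on the Hilbert sum of their spaces. -/
noncomputable def prodRep (V : G →* (E ≃ₗᵢ[𝕜] E)) (W : G →* (F ≃ₗᵢ[𝕜] F)) :
    G →* (WithLp 2 (E × F) ≃ₗᵢ[𝕜] WithLp 2 (E × F)) where
  toFun g := LinearIsometryEquiv.withLpProdCongr 2 (V g) (W g)
  map_one' := by simp only [map_one]; rfl
  map_mul' g h := by simp only [map_mul]; rfl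

/-- The first coordinate, as an intertwiner. -/
noncomputable def fstIntertwiner (V : G →* (E ≃ₗᵢ[𝕜] E)) (W : G →* (F ≃ₗᵢ[𝕜] F)) :
    Intertwiner (prodRep V W) V where
  toContinuousLinearMap := WithLp.fstL 2 𝕜 E F
  isIntertwining' _ := rfl

/-- The graph of a partially defined operator, as a subspace of the Hilbert sum. -/
def hilbertGraph (T : E →ₗ.[𝕜] F) : Submodule 𝕜 (WithLp 2 (E × F)) :=
  T.graph.comap (WithLp.linearEquiv 2 𝕜 (E × F)).toLinearMap

theorem isClosed_hilbertGraph {T : E →ₗ.[𝕜] F} (hT : T.IsClosed) :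
    IsClosed (hilbertGraph T : Set (WithLp 2 (E × F))) :=
  hT.preimage (WithLp.prodContinuousLinearEquiv 2 𝕜 E F).continuous

end UnitaryRepresentation

section Schur

variable {G E F : Type*} [Group G] [NormedAddCommGroup E] [InnerProductSpace ℂ E]
  [NormedAddCommGroup F] [InnerProductSpace ℂ F]
  {V : G →* (E ≃ₗᵢ[ℂ] E)} {W : G →* (F ≃ₗᵢ[ℂ] F)}

theorem exists_eq_algebraMap_of_cfc_mul_cfc_eq_zero {A : Type*} [Ring A] [StarRing A]
    [TopologicalSpace A] [Algebra ℝ A] [ContinuousFunctionalCalculus ℝ A IsSelfAdjoint] {a : A}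
    (ha : IsSelfAdjoint a)
    (h : ∀ f g : ℝ → ℝ, cfc f a * cfc g a = 0 → cfc f a = 0 ∨ cfc g a = 0) :
    ∃ c : ℝ, a = algebraMap ℝ A c := by
  have hsub : (spectrum ℝ a).Subsingleton := by
    refine Set.not_nontrivial_iff.1 fun hnt => ?_
    obtain ⟨s, hs, t, ht, hst⟩ := hnt.exists_lt
    obtain ⟨m, hsm, hmt⟩ := exists_between hst
    -- Two nonzero functions of `a` whose supports lie on opposite sides of `m`.
    let f : ℝ → ℝ := fun x => max (x - m) 0
    let g : ℝ → ℝ := fun x => max (m - x) 0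
    have hfc : Continuous f := by fun_prop
    have hgc : Continuous g := by fun_prop
    have hne : ∀ {k : ℝ → ℝ} {x : ℝ}, Continuous k → x ∈ spectrum ℝ a → 0 < k x → cfc k a ≠ 0 :=
      fun hk hx hpos h0 =>
        hpos.ne' (eqOn_of_cfc_eq_cfc (h0.trans (cfc_const_zero ℝ a).symm)
          hk.continuousOn continuousOn_const ha hx)
    have hfg : cfc f a * cfc g a = 0 := by
      have hzero : (fun x => f x * g x) = fun _ => 0 := by
        ext x
        rcases le_total x m with hx | hx <;> simp [f, g, hx]
      rw [← cfc_mul f g a, hzero, cfc_const_zero]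
    rcases h f g hfg with h0 | h0
    · exact hne hfc ht (lt_max_of_lt_left (sub_pos.2 hmt)) h0
    · exact hne hgc hs (lt_max_of_lt_left (sub_pos.2 hsm)) h0
  obtain ⟨c, hc⟩ : ∃ c : ℝ, spectrum ℝ a ⊆ {c} :=
    hsub.eq_empty_or_singleton.elim (fun h => ⟨0, by simp [h]⟩) fun ⟨c, h⟩ => ⟨c, h.subset⟩
  exact ⟨c, CFC.eq_algebraMap_of_spectrum_subset_singleton a c hc⟩

theorem IsTopIrreducible.exists_eq_smul_one_of_isSelfAdjoint [CompleteSpace E]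
    (hV : IsTopIrreducible V) (S : Intertwiner V V) (hS : IsSelfAdjoint S.toContinuousLinearMap) :
    ∃ c : ℝ, S = (c : ℂ) • 1 := by
  let calculus (f : ℝ → ℝ) : Intertwiner V V :=
    ⟨cfc f S.toContinuousLinearMap, fun g => (Commute.cfc_real (S.isIntertwining' g) f).eq⟩
  obtain ⟨c, hc⟩ := exists_eq_algebraMap_of_cfc_mul_cfc_eq_zero hS fun f g hfg => by
    refine (hV.eq_zero_or_injective (calculus f)).imp
      (congrArg ContIntertwiningMap.toContinuousLinearMap) fun hinj => ?_
    ext x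
    exact hinj ((congrArg (fun A : E →L[ℂ] E => A x) hfg).trans (_root_.map_zero (calculus f)).symm)
  refine ⟨c, ContIntertwiningMap.ext (hc.trans ?_)⟩
  rw [Algebra.algebraMap_eq_smul_one]
  rfl

theorem IsTopIrreducible.exists_eq_smul_one [CompleteSpace E] (hV : IsTopIrreducible V)
    (S : Intertwiner V V) : ∃ c : ℂ, S = c • 1 := by
  obtain ⟨a, ha⟩ := hV.exists_eq_smul_one_of_isSelfAdjoint (S + S.adjoint)
    (IsSelfAdjoint.add_star_self S.toContinuousLinearMap)
  obtain ⟨b, hb⟩ := hV.exists_eq_smul_one_of_isSelfAdjoint (Complex.I • (S - S.adjoint)) <| by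
    change star (Complex.I • (S.toContinuousLinearMap - star S.toContinuousLinearMap)) = _
    rw [star_smul, star_sub, star_star, Complex.star_def, Complex.conj_I, neg_smul, ← smul_neg,
      neg_sub]
    rfl
  refine ⟨(a - Complex.I * b) / 2, ?_⟩
  calc S = (2⁻¹ : ℂ) • ((S + S.adjoint) - Complex.I • Complex.I • (S - S.adjoint)) := by
        rw [smul_smul Complex.I, Complex.I_mul_I]
        module
    _ = ((a - Complex.I * b) / 2) • 1 := by
        rw [ha, hb]
        module

theorem finiteDimensional_intertwiner_of_isTopIrreducible [CompleteSpace E] [CompleteSpace F]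
    (hV : IsTopIrreducible V) (hW : IsTopIrreducible W) :
    FiniteDimensional ℂ (Intertwiner V W) := by
  have hcomm : FiniteDimensional ℂ (Intertwiner V V) :=
    .of_surjective (LinearMap.toSpanSingleton ℂ (Intertwiner V V) 1) fun S => by
      obtain ⟨c, rfl⟩ := hV.exists_eq_smul_one S
      exact ⟨c, rfl⟩
  by_cases hzero : ∀ S : Intertwiner V W, S = 0
  · have : Subsingleton (Intertwiner V W) := ⟨fun S R => (hzero S).trans (hzero R).symm⟩
    infer_instance
  push Not at hzero
  obtain ⟨S, hS⟩ := hzero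
  have hinj : Function.Injective S.adjoint :=
    (hW.eq_zero_or_injective S.adjoint).resolve_left fun h => hS <| by
      have h' : ContinuousLinearMap.adjoint S.toContinuousLinearMap = 0 :=
        congrArg ContIntertwiningMap.toContinuousLinearMap h
      exact ContIntertwiningMap.ext (by simpa using h')
  exact .of_injective (Intertwiner.sandwich S.adjoint (1 : Intertwiner V V)) fun A B hAB =>
    DFunLike.ext _ _ fun x => hinj (DFunLike.congr_fun hAB x)

end Schur

theorem exists_bound_of_isClosed_domain {𝕜 E F : Type*} [NontriviallyNormedField 𝕜]
    [NormedAddCommGroup E] [NormedSpace 𝕜 E] [CompleteSpace E]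
    [NormedAddCommGroup F] [NormedSpace 𝕜 F] [CompleteSpace F] {T : E →ₗ.[𝕜] F}
    (hT : T.IsClosed) (hdom : IsClosed (T.domain : Set E)) :
    ∃ C : ℝ, ∀ x : T.domain, ‖T x‖ ≤ C * ‖(x : E)‖ := by
  have := hdom.completeSpace_coe
  have hgraph : IsClosed (T.toFun.graph : Set (T.domain × F)) := by
    convert hT.preimage (continuous_subtype_val.prodMap continuous_id) using 1
    ext ⟨x, y⟩
    simp [LinearPMap.mem_graph_iff, eq_comm]
  let T' := ContinuousLinearMap.ofIsClosedGraph hgraph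
  exact ⟨‖T'‖, T'.le_opNorm⟩

section InvariantOperator

variable {H G : Type*} [NormedAddCommGroup H] [InnerProductSpace ℂ H] [Group G]
  {V : G →* (H ≃ₗᵢ[ℂ] H)} {T : H →ₗ.[ℂ] H}

theorem GInvariant.isInvariantSubspace_hilbertGraph (hinv : GInvariant V T) :
    IsInvariantSubspace (prodRep V V) (hilbertGraph T) := by
  rintro g _ ⟨z, hz, rfl⟩
  obtain ⟨x, hx, hTx⟩ := T.mem_graph_iff.1 hz
  obtain ⟨hgx, hTgx⟩ := hinv g x
  exact T.mem_graph_iff.2 ⟨⟨_, hgx⟩, congrArg (V g) hx, hTgx.trans (congrArg (V g) hTx)⟩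

theorem GInvariant.isClosed_domain [CompleteSpace H] [FiniteDimensional ℂ (Intertwiner V V)]
    (hinv : GInvariant V T) (hT : T.IsClosed) : IsClosed (T.domain : Set H) := by
  have := (isClosed_hilbertGraph hT).completeSpace_coe
  let S : Intertwiner hinv.isInvariantSubspace_hilbertGraph.subrep V :=
    (fstIntertwiner V V).comp hinv.isInvariantSubspace_hilbertGraph.inclusion
  have hrange : Set.range S = T.domain := Set.Subset.antisymm
    (Set.range_subset_iff.2 fun z => T.mem_domain_of_mem_graph z.2)
    fun x hx => ⟨⟨WithLp.toLp 2 (x, T ⟨x, hx⟩), T.mem_graph ⟨x, hx⟩⟩, rfl⟩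
  exact hrange ▸ S.isClosed_range

end InvariantOperator

theorem no_finite_irreducible_decomposition_general {H : Type*} [NormedAddCommGroup H]
    [InnerProductSpace ℂ H] [CompleteSpace H] {G : Type*} [Group G]
    (V : G →* (H ≃ₗᵢ[ℂ] H)) (T : H →ₗ.[ℂ] H) (hT : T.IsClosed)
    (hunbdd : ¬ ∃ C : ℝ, ∀ x : T.domain, ‖T x‖ ≤ C * ‖(x : H)‖) (hinv : GInvariant V T)
    {ι : Type*} [Finite ι] :
    ¬ ∃ (L : ι → Submodule ℂ H) (hL : ∀ k, IsInvariantSubspace V (L k)),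
        (∀ k, IsClosed (L k : Set H)) ∧
        (⨆ k, L k).topologicalClosure = ⊤ ∧
        ∀ k, IsTopIrreducible (hL k).subrep := by
  rintro ⟨L, hL, hclosed, htop, hirr⟩
  have := fun k => (hclosed k).completeSpace_coe
  have := fun k l => finiteDimensional_intertwiner_of_isTopIrreducible (hirr k) (hirr l)
  have := finiteDimensional_intertwiner_of_iSup hL hL htop htop
  exact hunbdd (exists_bound_of_isClosed_domain hT (hinv.isClosed_domain hT))

/-- If an unbounded self-adjoint operator `T` is `G`-invariant with respect to a unitary
representation `V`, then `V` cannot be a direct sum of finitely many irreducible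
representations. -/
theorem no_finite_irreducible_decomposition {H : Type*} [NormedAddCommGroup H]
    [InnerProductSpace ℂ H] [CompleteSpace H] {G : Type*} [Group G]
    (V : G →* (H ≃ₗᵢ[ℂ] H))
    (T : H →ₗ.[ℂ] H) (hdense : Dense (T.domain : Set H)) (hsa : T.adjoint = T)
    -- `T` is unbounded
    (hunbdd : ¬ ∃ C : ℝ, ∀ x : T.domain, ‖T x‖ ≤ C * ‖(x : H)‖)
    (hinv : GInvariant V T) :
    ¬ ∃ (N : ℕ) (Hn : Fin N → Submodule ℂ H),
        (∀ k, IsClosed ((Hn k : Submodule ℂ H) : Set H)) ∧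
        (∀ k l, k ≠ l → ∀ x ∈ Hn k, ∀ y ∈ Hn l, ⟪x, y⟫_ℂ = 0) ∧
        (⨆ k, Hn k).topologicalClosure = ⊤ ∧
        (∀ (g : G) (k : Fin N), (Hn k).map (V g).toLinearEquiv.toLinearMap = Hn k) ∧
        (∀ k, ∀ K : Submodule ℂ H, K ≤ Hn k → IsClosed (K : Set H) →
          (∀ g : G, K.map (V g).toLinearEquiv.toLinearMap ≤ K) → K = ⊥ ∨ K = Hn k) := by
  rintro ⟨N, L, hclosed, -, htop, hmap, hirr⟩
  exact no_finite_irreducible_decomposition_general V T (IsSelfAdjoint.isClosed hsa) hunbdd hinv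
    ⟨L, fun k g => (hmap g k).le, hclosed, htop,
      fun k => isTopIrreducible_subrep (hclosed k) _ (hirr k)⟩
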